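/- arXiv:math/0402125 — 2 statements merged into one kernel-verified Lean document; each statement's English description precedes it below -/
import Mathlib

section
/- Dobinski's formula: for every natural number n, the Bell number B_n satisfies B_n = e^{-1} ∑_{k=0}^∞ k^n / k!, the series on the right being convergent. -/
/-- The Bell numbers: `bell 0 = 1` and `bell (n+1) = ∑_{k=0}^{n} (n choose k) * bell k`. -/
def bell : ℕ → ℕ
  | 0 => 1
  | n + 1 => ∑ k ∈ (Finset.range (n + 1)).attach, Nat.choose n k.1 * bell k.1
decreasing_by exact Finset.mem_range.mp k.2

theorem dobinski_hasSum (n : ℕ) :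
    HasSum (fun k : ℕ => (k : ℝ) ^ n / (Nat.factorial k)) (bell n * Real.exp 1) := by
  induction n using Nat.strong_induction_on with
  | _ n ih =>
    cases n with
    | zero =>
      have h := NormedSpace.expSeries_div_hasSum_exp (1 : ℝ)
      rw [← Real.exp_eq_exp_ℝ] at h
      simpa [bell] using h
    | succ n =>
      have hb : bell (n + 1) = ∑ k ∈ Finset.range (n + 1), Nat.choose n k * bell k := by
        rw [bell]
        exact Finset.sum_attach (Finset.range (n + 1)) (fun k => Nat.choose n k * bell k)
      have hs : HasSum (fun k : ℕ => ∑ m ∈ Finset.range (n + 1),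
          (Nat.choose n m : ℝ) * ((k : ℝ) ^ m / (Nat.factorial k)))
          (∑ m ∈ Finset.range (n + 1), (Nat.choose n m : ℝ) * (bell m * Real.exp 1)) :=
        hasSum_sum fun m hm => (ih m (Finset.mem_range.mp hm)).mul_left _
      rw [← hasSum_nat_add_iff' 1]
      convert hs using 1
      · rfl
      · funext k
        have hk : (Nat.factorial k : ℝ) ≠ 0 := by positivity
        have hk1 : (k : ℝ) + 1 ≠ 0 := by positivity
        have e : ((k : ℝ) + 1) ^ n
            = ∑ m ∈ Finset.range (n + 1), (k : ℝ) ^ m * (Nat.choose n m : ℝ) := by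
          rw [add_pow]; simp
        rw [Nat.factorial_succ]
        push_cast
        rw [pow_succ, mul_comm (((k : ℝ) + 1) ^ n), mul_div_mul_left _ _ hk1, e,
          Finset.sum_div]
        exact Finset.sum_congr rfl fun m _ => by ring
      · rw [hb]
        push_cast
        simp [Finset.sum_mul, mul_assoc]

/-- Dobinski's formula: for every `n`, the series `∑ₖ kⁿ / k!` converges and
`Bₙ = e⁻¹ ∑ₖ kⁿ / k!`. -/
theorem dobinski (n : ℕ) :
    Summable (fun k : ℕ => (k : ℝ) ^ n / (Nat.factorial k)) ∧
      (bell n : ℝ) = Real.exp (-1) * ∑' k : ℕ, (k : ℝ) ^ n / (Nat.factorial k) := by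
  have h := dobinski_hasSum n
  refine ⟨h.summable, ?_⟩
  rw [h.tsum_eq, mul_left_comm, ← Real.exp_add]
  simp
end

section
/- If X is a random variable with the Poisson distribution of mean 1, then for every natural number n the expectation of X^n equals the n-th Bell number; that is, e^{-1} ∑_{k=0}^∞ k^n / k! = B_n. -/
theorem bell_hasSum_aux (n : ℕ) :
    HasSum (fun k : ℕ => (k : ℝ) ^ n / (Nat.factorial k)) (Real.exp 1 * (bell n : ℝ)) := by
  induction n using Nat.strong_induction_on with
  | _ n ih =>
    cases n with
    | zero =>
      have h := NormedSpace.expSeries_div_hasSum_exp (1 : ℝ)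
      rw [← Real.exp_eq_exp_ℝ] at h
      simpa [bell] using h
    | succ n =>
      have hb : (bell (n + 1) : ℝ) =
          ∑ j ∈ Finset.range (n + 1), (Nat.choose n j : ℝ) * (bell j : ℝ) := by
        rw [bell, Finset.sum_attach (Finset.range (n + 1)) (fun j => Nat.choose n j * bell j)]
        push_cast
        rfl
      have h : HasSum (fun k : ℕ => ∑ j ∈ Finset.range (n + 1),
          (Nat.choose n j : ℝ) * ((k : ℝ) ^ j / (Nat.factorial k)))
          (∑ j ∈ Finset.range (n + 1), (Nat.choose n j : ℝ) * (Real.exp 1 * (bell j : ℝ))) :=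
        hasSum_sum fun j hj => (ih j (Finset.mem_range.mp hj)).mul_left _
      rw [← hasSum_nat_add_iff' 1]
      convert h using 1
      · rfl
      · funext k
        have hk : (Nat.factorial k : ℝ) ≠ 0 := by positivity
        have hk1 : (k : ℝ) + 1 ≠ 0 := by positivity
        have e : ((k : ℝ) + 1) ^ (n + 1) / (((k : ℝ) + 1) * (Nat.factorial k : ℝ))
            = ((k : ℝ) + 1) ^ n / (Nat.factorial k : ℝ) := by
          rw [pow_succ', mul_div_mul_left _ _ hk1]
        rw [Nat.factorial_succ]
        push_cast
        rw [e, add_pow, Finset.sum_div]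
        refine Finset.sum_congr rfl fun j _ => ?_
        rw [one_pow]
        ring
      · rw [hb, Finset.mul_sum]
        simp only [Finset.range_one, Finset.sum_singleton, Nat.cast_zero, ne_eq,
          Nat.succ_ne_zero, not_false_eq_true, zero_pow, zero_div, sub_zero]
        exact Finset.sum_congr rfl fun j _ => by ring

/-- For a random variable `X` with Poisson distribution of mean 1 (i.e. `P(X = k) = e⁻¹ / k!`),
the expectation of `Xⁿ` is the `n`-th Bell number: `e⁻¹ ∑ₖ kⁿ / k! = Bₙ`. -/
theorem poisson_moment_eq_bell (n : ℕ) :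
    Summable (fun k : ℕ => (k : ℝ) ^ n / (Nat.factorial k)) ∧
      Real.exp (-1) * ∑' k : ℕ, (k : ℝ) ^ n / (Nat.factorial k) = (bell n : ℝ) := by
  refine ⟨(bell_hasSum_aux n).summable, ?_⟩
  rw [(bell_hasSum_aux n).tsum_eq, ← mul_assoc, ← Real.exp_add]
  simp
end
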